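/- arXiv:1102.2127 — 2 statements merged into one kernel-verified Lean document; each statement's English description precedes it below -/
import Mathlib

section
/- Let G be an idempotent groupoid and n ≥ 3 such that both identities x₀*⟨x₁⋯xₙ⟩_L = x₀*⟨x₁⋯xₙ⟩_R and ⟨x₁⋯xₙ⟩_L*x₀ = ⟨x₁⋯xₙ⟩_R*x₀ hold for all x₀, x₁,…,xₙ ∈ G. Then G is a semigroup, i.e. * is associative. -/
/-- The left-associated product `((x * l₁) * l₂) * ⋯ * lₘ`. -/
def leftAssoc {G : Type*} (op : G → G → G) (x : G) (l : List G) : G :=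
  l.foldl op x

/-- The right-associated product `x * (l₁ * (l₂ * (⋯ * lₘ)))`. -/
def rightAssoc {G : Type*} (op : G → G → G) : G → List G → G
  | x, [] => x
  | x, y :: l => op x (rightAssoc op y l)

/-!
Write `L_x = op x` and `R_x = flip op x` for the left and right translations. In an idempotent
groupoid the pair `(L_a, R_a)` determines `a`, so the two identities give `⟨x₁⋯xₙ⟩_L = ⟨x₁⋯xₙ⟩_R`.
With `q = n - 2`, the words `x^q y z` and `x y z^q` then yield `L_{xy} = L_x^q L_y` and
`R_{yz} = R_z^q R_y`. Hence `L_x^{q+1} = L_{xx} = L_x`, so `L_x^q` is idempotent and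
`L_{x(xu)} = L_x^{2q} L_u = L_x^q L_u = L_{xu}`. Dually, since `x(xu) = R_u^q x`, also
`R_{x(xu)} = R_{xu}`. So `x(xu) = xu`, whence `L_x^q = L_x` and `L_{xy} = L_x L_y`.
-/

section Products

variable {G : Type*} {op : G → G → G}

lemma leftAssoc_replicate (x z : G) (k : ℕ) :
    leftAssoc op x (List.replicate k z) = (flip op z)^[k] x := by
  induction k generalizing x with
  | zero => rfl
  | succ _ ih => exact ih (op x z)

lemma leftAssoc_replicate_self_append {x : G} (hx : op x x = x) (k : ℕ) (l : List G) :
    leftAssoc op x (List.replicate k x ++ l) = leftAssoc op x l := by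
  have hpow : (List.replicate k x).foldl op x = x :=
    (leftAssoc_replicate x x k).trans (Function.iterate_fixed (f := flip op x) hx k)
  rw [leftAssoc, List.foldl_append, hpow, leftAssoc]

lemma rightAssoc_replicate_append_cons (x y : G) (k : ℕ) (l : List G) :
    rightAssoc op x (List.replicate k x ++ y :: l) = (op x)^[k + 1] (rightAssoc op y l) := by
  induction k with
  | zero => rfl
  | succ k ih =>
    rw [List.replicate_succ, List.cons_append, rightAssoc, ih,
      ← Function.iterate_succ_apply' (op x)]

lemma rightAssoc_replicate_self {z : G} (hz : op z z = z) (k : ℕ) :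
    rightAssoc op z (List.replicate k z) = z := by
  induction k with
  | zero => rfl
  | succ k ih => rw [List.replicate_succ, rightAssoc, ih, hz]

end Products

lemma iterate_comp_iterate_of_iterate_succ_eq {α : Type*} {f : α → α} {q : ℕ}
    (hf : f^[q + 1] = f) : f^[q] ∘ f^[q] = f^[q] := by
  cases q with
  | zero => rfl
  | succ k =>
    calc f^[k + 1] ∘ f^[k + 1] = f^[k + 1 + 1] ∘ f^[k] := by
          rw [← Function.iterate_add, ← Function.iterate_add]; congr 1; omega
      _ = f ∘ f^[k] := by rw [hf]
      _ = f^[k + 1] := (Function.iterate_succ' f k).symm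

lemma eq_of_translations_eq {G : Type*} {op : G → G → G} (idem : ∀ x, op x x = x) {a b : G}
    (hleft : op a = op b) (hright : flip op a = flip op b) : a = b :=
  calc a = op a a := (idem a).symm
    _ = op b a := congrFun hleft a
    _ = op b b := congrFun hright b
    _ = b := idem b

/-- The weakening `(x * y) * z = x * (x * ⋯ (x * (y * z)))`, with `q` factors `x` on the right, of
associativity, which is the case `q = 1`. It is stated for left translations; the mirror-image law
for right translations is `IsIterateAssoc (flip op) q`. -/
def IsIterateAssoc {G : Type*} (op : G → G → G) (q : ℕ) : Prop :=
  ∀ x y : G, op (op x y) = (op x)^[q] ∘ op y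

section IterateAssoc

variable {G : Type*} {op : G → G → G} {q : ℕ}

lemma IsIterateAssoc.iterate_succ_eq (h : IsIterateAssoc op q) {x : G} (hx : op x x = x) :
    (op x)^[q + 1] = op x := by
  rw [Function.iterate_succ, ← h, hx]

lemma IsIterateAssoc.op_iterate_eq (h : IsIterateAssoc op q) {x : G} (hx : op x x = x) (u : G)
    {j : ℕ} (hj : j ≠ 0) : op ((op x)^[j] u) = op (op x u) := by
  induction j, Nat.one_le_iff_ne_zero.mpr hj using Nat.le_induction with
  | base => rfl
  | succ j hj' ih =>
    calc op ((op x)^[j + 1] u) = (op x)^[q] ∘ op ((op x)^[j] u) := by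
          rw [Function.iterate_succ_apply', h]
      _ = ((op x)^[q] ∘ (op x)^[q]) ∘ op u := by
          rw [ih (Nat.one_le_iff_ne_zero.mp hj'), h, Function.comp_assoc]
      _ = op (op x u) := by
          rw [iterate_comp_iterate_of_iterate_succ_eq (h.iterate_succ_eq hx), h]

lemma op_op_self_left (idem : ∀ x, op x x = x) (hq : q ≠ 0) (hleft : IsIterateAssoc op q)
    (hright : IsIterateAssoc (flip op) q) (x u : G) : op x (op x u) = op x u := by
  have as_iterate : op x (op x u) = (flip op u)^[q] x := by
    simpa only [flip, Function.comp_apply, idem] using congrFun (hright u x) x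
  refine eq_of_translations_eq idem (hleft.op_iterate_eq (idem x) u two_ne_zero) ?_
  rw [as_iterate]
  exact hright.op_iterate_eq (idem u) x hq

lemma assoc_of_isIterateAssoc (idem : ∀ x, op x x = x) (hq : q ≠ 0)
    (hleft : IsIterateAssoc op q) (hright : IsIterateAssoc (flip op) q) (x y z : G) :
    op (op x y) z = op x (op y z) := by
  obtain ⟨k, rfl⟩ := Nat.exists_eq_succ_of_ne_zero hq
  calc op (op x y) z = (op x)^[k] (op x (op y z)) := congrFun (hleft x y) z
    _ = op x (op y z) := Function.iterate_fixed (op_op_self_left idem hq hleft hright x _) k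

end IterateAssoc

section LeftEqRight

variable {G : Type*} {op : G → G → G} {k : ℕ}

lemma isIterateAssoc_of_leftAssoc_eq_rightAssoc (idem : ∀ x, op x x = x)
    (h : ∀ (x : G) (l : List G), l.length = k + 2 → leftAssoc op x l = rightAssoc op x l) :
    IsIterateAssoc op (k + 1) := fun x y ↦ funext fun z ↦
  calc op (op x y) z = leftAssoc op x (List.replicate k x ++ [y, z]) :=
        (leftAssoc_replicate_self_append (idem x) k [y, z]).symm
    _ = rightAssoc op x (List.replicate k x ++ [y, z]) := h x _ (by simp)
    _ = (op x)^[k + 1] (op y z) := rightAssoc_replicate_append_cons x y k [z]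

lemma isIterateAssoc_flip_of_leftAssoc_eq_rightAssoc (idem : ∀ x, op x x = x)
    (h : ∀ (x : G) (l : List G), l.length = k + 2 → leftAssoc op x l = rightAssoc op x l) :
    IsIterateAssoc (flip op) (k + 1) := fun z y ↦ funext fun x ↦
  calc op x (op y z) = rightAssoc op x (y :: List.replicate (k + 1) z) := by
        rw [List.replicate_succ, rightAssoc, rightAssoc, rightAssoc_replicate_self (idem z)]
    _ = leftAssoc op x (y :: List.replicate (k + 1) z) := (h x _ (by simp)).symm
    _ = (flip op z)^[k + 1] (op x y) := leftAssoc_replicate (op x y) z (k + 1)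

end LeftEqRight

/-- An idempotent groupoid satisfying the identities
`x₀*⟨x₁⋯xₙ⟩_L = x₀*⟨x₁⋯xₙ⟩_R` and `⟨x₁⋯xₙ⟩_L*x₀ = ⟨x₁⋯xₙ⟩_R*x₀`
for some `n ≥ 3` must be a semigroup. -/
theorem idempotent_mul_leftAssoc_eq_mul_rightAssoc_implies_assoc
    {G : Type*} (op : G → G → G)
    (idem : ∀ x : G, op x x = x)
    (n : ℕ) (hn : 3 ≤ n)
    (h₁ : ∀ (x₀ x : G) (l : List G), l.length = n - 1 →
      op x₀ (leftAssoc op x l) = op x₀ (rightAssoc op x l))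
    (h₂ : ∀ (x₀ x : G) (l : List G), l.length = n - 1 →
      op (leftAssoc op x l) x₀ = op (rightAssoc op x l) x₀) :
    ∀ x y z : G, op (op x y) z = op x (op y z) := by
  obtain ⟨k, rfl⟩ := Nat.exists_eq_add_of_le' hn
  have left_eq_right (x : G) (l : List G) (hl : l.length = k + 2) :
      leftAssoc op x l = rightAssoc op x l :=
    eq_of_translations_eq idem (funext fun x₀ ↦ h₂ x₀ x l hl) (funext fun x₀ ↦ h₁ x₀ x l hl)
  exact assoc_of_isIterateAssoc idem k.succ_ne_zero
    (isIterateAssoc_of_leftAssoc_eq_rightAssoc idem left_eq_right)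
    (isIterateAssoc_flip_of_leftAssoc_eq_rightAssoc idem left_eq_right)
end

section
/- Let G be a groupoid satisfying the three identities x*x = x, x*(y*z) = x*y, and (x*y)*y = x*y for all x, y, z ∈ G. Then either G is a left zero semigroup (x*y = x for all x, y ∈ G), or for every n ≥ 2 the number of distinct n-ary functions Gⁿ → G induced by bracketings of size n equals exactly 2^(n−2); that is, s_G(n) = 2^(n−2) for all n ≥ 2. -/
/-!
By `x * (y * z) = x * y`, a right factor of a product matters only through its leftmost variable.
Hence a bracketing `((x₀ * Q₁) * Q₂) * ⋯ * Qₖ` induces the left-normed product of `x₀` and the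
leftmost variables of `Q₁, …, Qₖ`, so the induced function is determined by the set of positions of
these variables. For bracketings of size `n ≥ 2` these sets are exactly the subsets of
`{1, …, n - 1}` containing `1`, which leaves at most `2 ^ (n - 2)` functions.

Conversely, suppose `a * b ≠ a`. Put `b` at position `m` and `a` everywhere else. As `a * a = a` and
`(a * b) * a = (a * b) * (a * b) = a * b`, the value is `a * b` if `m` belongs to the set and `a`
otherwise, so the induced function determines the set.
-/

/-- A bracketing: a full binary tree. Its leaves, read from left to right,
carry the variables of the bracketed product. -/
inductive Bracketing : Type
  | leaf : Bracketing
  | node : Bracketing → Bracketing → Bracketing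

/-- The size of a bracketing: its number of leaves. -/
def Bracketing.size : Bracketing → ℕ
  | .leaf => 1
  | .node P Q => P.size + Q.size

/-- Evaluate a bracketing in a groupoid `(G, op)` on the variables
`f i, f (i+1), …` (assigned to the leaves from left to right). -/
def Bracketing.eval {G : Type*} (op : G → G → G) : Bracketing → (ℕ → G) → ℕ → G
  | .leaf, f, i => f i
  | .node P Q, f, i => op (P.eval op f i) (Q.eval op f (i + P.size))

namespace Bracketing

/-- The spine of `((x₀ * Q₁) * Q₂) * ⋯ * Qₖ`: the set of positions, counted from `0`, of the
leftmost leaves of the right factors `Q₁, …, Qₖ`. -/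
def spine : Bracketing → Finset ℕ
  | leaf => ∅
  | node P _ => insert P.size P.spine

theorem size_pos (B : Bracketing) : 0 < B.size := by
  induction B with
  | leaf => exact Nat.one_pos
  | node P Q hP _ => exact Nat.add_pos_left hP Q.size

theorem lt_size_of_mem_spine {B : Bracketing} {i : ℕ} (hi : i ∈ B.spine) : i < B.size := by
  induction B with
  | leaf => simp [spine] at hi
  | node P Q hP _ =>
    have hQ := Q.size_pos
    rw [size]
    rcases Finset.mem_insert.1 hi with rfl | hi
    · omega
    · exact (hP hi).trans_le (Nat.le_add_right _ _)

theorem size_notMem_spine (B : Bracketing) : B.size ∉ B.spine :=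
  fun h => (lt_size_of_mem_spine h).false

theorem pos_of_mem_spine {B : Bracketing} {i : ℕ} (hi : i ∈ B.spine) : 0 < i := by
  induction B with
  | leaf => simp [spine] at hi
  | node P Q hP _ =>
    rcases Finset.mem_insert.1 hi with rfl | hi
    · exact P.size_pos
    · exact hP hi

theorem one_mem_spine {B : Bracketing} (hB : 2 ≤ B.size) : 1 ∈ B.spine := by
  induction B with
  | leaf => simp [size] at hB
  | node P Q hP _ =>
    rcases Nat.eq_or_lt_of_le P.size_pos with h | h
    · exact Finset.mem_insert.2 (Or.inl h)
    · exact Finset.mem_insert_of_mem (hP h)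

theorem spine_mem_Icc {B : Bracketing} (hB : 2 ≤ B.size) :
    B.spine ∈ Finset.Icc {1} (Finset.Ico 1 B.size) :=
  Finset.mem_Icc.2 ⟨Finset.singleton_subset_iff.2 (one_mem_spine hB), fun _ hi =>
    Finset.mem_Ico.2 ⟨pos_of_mem_spine hi, lt_size_of_mem_spine hi⟩⟩

theorem exists_size_eq_spine_eq {n : ℕ} (hn : 2 ≤ n) {S : Finset ℕ}
    (hS : S ∈ Finset.Icc {1} (Finset.Ico 1 n)) : ∃ B : Bracketing, B.size = n ∧ B.spine = S := by
  induction n, hn using Nat.le_induction generalizing S with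
  | base =>
    have hS' : S = {1} := by simpa [Nat.Ico_succ_singleton] using hS
    exact ⟨node leaf leaf, rfl, hS'.symm⟩
  | succ n hn ih =>
    obtain ⟨hone, hlt⟩ := Finset.mem_Icc.1 hS
    have h1 : 1 ∈ S := Finset.singleton_subset_iff.1 hone
    have hS' : S.erase n ∈ Finset.Icc {1} (Finset.Ico 1 n) := by
      refine Finset.mem_Icc.2 ⟨Finset.singleton_subset_iff.2 ?_, fun i hi => ?_⟩
      · exact Finset.mem_erase.2 ⟨by omega, h1⟩
      · obtain ⟨hin, hiS⟩ := Finset.mem_erase.1 hi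
        have := Finset.mem_Ico.1 (hlt hiS)
        exact Finset.mem_Ico.2 (by omega)
    obtain ⟨B, hB, hBS⟩ := ih hS'
    by_cases hnS : n ∈ S
    · refine ⟨node B leaf, by rw [size, hB, size], ?_⟩
      rw [spine, hBS, hB, Finset.insert_erase hnS]
    · rw [Finset.erase_eq_of_notMem hnS] at hBS
      cases B with
      | leaf => rw [size] at hB; omega
      | node P Q => exact ⟨node P (node Q leaf), by simp only [size] at hB ⊢; omega, hBS⟩

theorem size_eq_and_spine_eq_of_spine_node_eq {P Q P' Q' : Bracketing}
    (h : (node P Q).spine = (node P' Q').spine) : P.size = P'.size ∧ P.spine = P'.spine := by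
  have le_of_spine_eq {P Q P' Q' : Bracketing} (h : (node P Q).spine = (node P' Q').spine) :
      P.size ≤ P'.size := by
    have hP : P.size ∈ (node P' Q').spine := h ▸ Finset.mem_insert_self P.size P.spine
    rcases Finset.mem_insert.1 hP with hP | hP
    · exact hP.le
    · exact (lt_size_of_mem_spine hP).le
  have hsize := (le_of_spine_eq h).antisymm (le_of_spine_eq h.symm)
  refine ⟨hsize, ?_⟩
  rw [spine, spine, ← hsize] at h
  rw [← Finset.erase_insert P.size_notMem_spine, h,
    Finset.erase_insert (hsize ▸ P'.size_notMem_spine)]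

section Eval

variable {G : Type*} {op : G → G → G}

theorem op_eval (h2 : ∀ x y z : G, op x (op y z) = op x y) (x : G) (B : Bracketing) (f : ℕ → G)
    (i : ℕ) : op x (B.eval op f i) = op x (f i) := by
  induction B generalizing i with
  | leaf => rfl
  | node P Q hP _ => rw [eval, h2, hP]

theorem eval_node (h2 : ∀ x y z : G, op x (op y z) = op x y) (P Q : Bracketing) (f : ℕ → G)
    (i : ℕ) : (node P Q).eval op f i = op (P.eval op f i) (f (i + P.size)) :=
  op_eval h2 _ Q f _

theorem eval_eq_of_spine_eq (h2 : ∀ x y z : G, op x (op y z) = op x y) {B C : Bracketing}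
    (h : B.spine = C.spine) (f : ℕ → G) (i : ℕ) : B.eval op f i = C.eval op f i := by
  induction B generalizing C with
  | leaf =>
    cases C with
    | leaf => rfl
    | node P Q => exact absurd h.symm (Finset.insert_ne_empty _ _)
  | node P Q hP _ =>
    cases C with
    | leaf => exact absurd h (Finset.insert_ne_empty _ _)
    | node P' Q' =>
      obtain ⟨hsize, hspine⟩ := size_eq_and_spine_eq_of_spine_node_eq h
      rw [eval_node h2, eval_node h2, hP hspine, hsize]

theorem eval_eq_ite_mem_spine (h1 : ∀ x : G, op x x = x)
    (h2 : ∀ x y z : G, op x (op y z) = op x y) {B : Bracketing} {f : ℕ → G} {m : ℕ} {a : G}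
    (h0 : f 0 = a) (hf : ∀ i ∈ B.spine, i ≠ m → f i = a) :
    B.eval op f 0 = if m ∈ B.spine then op a (f m) else a := by
  induction B with
  | leaf => simpa [eval, spine] using h0
  | node P Q hP _ =>
    have hP := hP fun i hi => hf i (Finset.mem_insert_of_mem hi)
    rw [eval_node h2, zero_add, hP, spine]
    by_cases hm : m = P.size
    · rw [hm, if_neg P.size_notMem_spine, if_pos (Finset.mem_insert_self _ _)]
    · have absorb_left (y : G) : op (op a y) a = op a y := by rw [← h2 (op a y) a y, h1]
      have hfP : f P.size = a := hf _ (Finset.mem_insert_self _ _) (Ne.symm hm)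
      rw [hfP, apply_ite (op · a), absorb_left, h1]
      simp only [Finset.mem_insert, hm, false_or]

/-- The `n`-ary function induced by a bracketing `B`. The valuation `Fin n → G` is extended to `ℕ`
periodically, which has no effect when `B` has at most `n` leaves. -/
def termFun (op : G → G → G) {n : ℕ} (hn : 0 < n) (B : Bracketing) (v : Fin n → G) : G :=
  B.eval op (fun i => v ⟨i % n, Nat.mod_lt i hn⟩) 0

theorem termFun_ite_eq_ite_mem_spine (h1 : ∀ x : G, op x x = x)
    (h2 : ∀ x y z : G, op x (op y z) = op x y) (a b : G) {n : ℕ} (hn : 0 < n) {B : Bracketing}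
    (hB : B.size ≤ n) {m : ℕ} (hm0 : 0 < m) (hmn : m < n) :
    B.termFun op hn (fun i => if i.1 = m then b else a) = if m ∈ B.spine then op a b else a := by
  rw [termFun, eval_eq_ite_mem_spine h1 h2 (m := m) (a := a)]
  · simp only [Nat.mod_eq_of_lt hmn, if_true]
  · simp [hm0.ne]
  · intro i hi him
    simp only [Nat.mod_eq_of_lt ((lt_size_of_mem_spine hi).trans_le hB), if_neg him]

theorem termFun_eq_iff_spine_eq (h1 : ∀ x : G, op x x = x)
    (h2 : ∀ x y z : G, op x (op y z) = op x y) {a b : G} (hab : op a b ≠ a) {n : ℕ} (hn : 0 < n)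
    {B C : Bracketing} (hB : B.size ≤ n) (hC : C.size ≤ n) :
    B.termFun op hn = C.termFun op hn ↔ B.spine = C.spine := by
  refine ⟨fun h => ?_, fun h => funext fun v => eval_eq_of_spine_eq h2 h _ 0⟩
  have mem_iff {m : ℕ} (hm0 : 0 < m) (hmn : m < n) : m ∈ B.spine ↔ m ∈ C.spine := by
    have hm := congrFun h fun i => if i.1 = m then b else a
    rw [termFun_ite_eq_ite_mem_spine h1 h2 a b hn hB hm0 hmn,
      termFun_ite_eq_ite_mem_spine h1 h2 a b hn hC hm0 hmn] at hm
    split_ifs at hm with hmB hmC hmC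
    · exact iff_of_true hmB hmC
    · exact absurd hm hab
    · exact absurd hm.symm hab
    · exact iff_of_false hmB hmC
  ext m
  exact ⟨fun hm => (mem_iff (pos_of_mem_spine hm) ((lt_size_of_mem_spine hm).trans_le hB)).1 hm,
    fun hm => (mem_iff (pos_of_mem_spine hm) ((lt_size_of_mem_spine hm).trans_le hC)).2 hm⟩

/-- The set of `n`-ary functions induced by the bracketings of size `n`. Its cardinality is the
value at `n` of the associative spectrum of `(G, op)`. -/
def termFuns (op : G → G → G) {n : ℕ} (hn : 0 < n) : Set ((Fin n → G) → G) :=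
  {F | ∃ B : Bracketing, B.size = n ∧ F = B.termFun op hn}

theorem exists_bijOn_termFuns (h1 : ∀ x : G, op x x = x)
    (h2 : ∀ x y z : G, op x (op y z) = op x y) {a b : G} (hab : op a b ≠ a) {n : ℕ} (hn : 2 ≤ n) :
    ∃ Φ : Finset ℕ → (Fin n → G) → G, Set.BijOn Φ (Finset.Icc {1} (Finset.Ico 1 n) : Finset _)
      (termFuns op (Nat.zero_lt_of_lt hn)) := by
  have : Nonempty Bracketing := ⟨leaf⟩
  choose! bracketing hsize hspine using fun S => exists_size_eq_spine_eq hn (S := S)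
  have termFun_eq_iff {B C : Bracketing} (hB : B.size = n) (hC : C.size = n) :=
    termFun_eq_iff_spine_eq h1 h2 hab (Nat.zero_lt_of_lt hn) hB.le hC.le
  refine ⟨fun S => (bracketing S).termFun op _, fun S hS => ⟨_, hsize S hS, rfl⟩, ?_, ?_⟩
  · intro S hS T hT hST
    rw [← hspine S hS, ← hspine T hT]
    exact (termFun_eq_iff (hsize S hS) (hsize T hT)).1 hST
  · rintro _ ⟨B, rfl, rfl⟩
    have hB := spine_mem_Icc hn
    exact ⟨B.spine, hB, (termFun_eq_iff (hsize _ hB) rfl).2 (hspine _ hB)⟩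

end Eval

end Bracketing

theorem D_cap_A_spectrum_general
    {G : Type*} (op : G → G → G)
    (h1 : ∀ x : G, op x x = x)
    (h2 : ∀ x y z : G, op x (op y z) = op x y) :
    (∀ x y : G, op x y = x) ∨
    (∀ n : ℕ, ∀ hn : 2 ≤ n,
      (Bracketing.termFuns op (Nat.zero_lt_of_lt hn)).Finite ∧
      (Bracketing.termFuns op (Nat.zero_lt_of_lt hn)).ncard = 2 ^ (n - 2)) := by
  refine or_iff_not_imp_left.2 fun hleft n hn => ?_
  obtain ⟨a, b, hab⟩ : ∃ a b, op a b ≠ a := by simpa only [not_forall] using hleft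
  obtain ⟨Φ, hΦ⟩ := Bracketing.exists_bijOn_termFuns h1 h2 hab hn
  refine ⟨hΦ.finite_iff_finite.1 (Finset.finite_toSet _), hΦ.ncard_eq.symm.trans ?_⟩
  have hone : {1} ⊆ Finset.Ico 1 n :=
    Finset.singleton_subset_iff.2 (Finset.mem_Ico.2 ⟨le_rfl, hn⟩)
  rw [Set.ncard_coe_finset, Finset.card_Icc_finset hone, Nat.card_Ico, Finset.card_singleton,
    Nat.sub_sub]

/-- A groupoid satisfying `x*x = x`, `x*(y*z) = x*y` and `(x*y)*y = x*y` is
either a left zero semigroup or its associative spectrum is exactly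
`s_G(n) = 2^(n-2)` for all `n ≥ 2`. -/
theorem D_cap_A_spectrum
    {G : Type*} (op : G → G → G)
    (h1 : ∀ x : G, op x x = x)
    (h2 : ∀ x y z : G, op x (op y z) = op x y)
    (h3 : ∀ x y : G, op (op x y) y = op x y) :
    (∀ x y : G, op x y = x) ∨
    (∀ n : ℕ, ∀ hn : 2 ≤ n,
      Set.Finite {F : (Fin n → G) → G | ∃ B : Bracketing, B.size = n ∧
        F = fun v => B.eval op (fun i => v ⟨i % n, Nat.mod_lt i (by omega)⟩) 0} ∧
      Set.ncard {F : (Fin n → G) → G | ∃ B : Bracketing, B.size = n ∧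
        F = fun v => B.eval op (fun i => v ⟨i % n, Nat.mod_lt i (by omega)⟩) 0} =
        2 ^ (n - 2)) :=
  D_cap_A_spectrum_general op h1 h2
end
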